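/- Let Λ > 0, γ = √(Λ/3), Z(t) = e^{γt}, t₀ > 0. Suppose f(t,p) ≥ 0 is given on [t₀,T]×ℝ³ with sup_{t₀≤s≤T} ‖f(s)‖_{L^∞_m} ≤ c₂ for some c₂ > 0 and m > 5. Let g₀^{ab} and k₀^{ab} be symmetric matrices with (1/A)|p|² ≤ e^{2γt₀} g₀^{ab}p_a p_b ≤ A|p|², max|k₀^{ab}| ≤ A e^{−2γt₀}, H₀ > γ and F₀ < 1/4, and define the iteration (g_n^{ab}, k_n^{ab}) by g_0^{ab}(t) = g₀^{ab}, k_0^{ab}(t) = k₀^{ab}, d g_{n+1}^{ab}/dt = −2k_n^{ab}, d k_{n+1}^{ab}/dt = −2 k_n{}^a{}_c k_n^{bc} − k_n k_n^{ab} + S_n^{ab} + (1/2)(ρ_n − S_n) g_n^{ab} + Λ g_n^{ab}, with the matter terms S_n^{ab}, ρ_n, S_n the weighted moments of f computed with the metric g_n^{ab}. Then for every C₁ > 1 there exist T₂ ∈ (t₀,T] and η ∈ [0,1) such that for all n and all t ∈ [t₀,T₂]: (1/(C₁A))|p|² ≤ Z² g_n^{ab}p_a p_b ≤ C₁A|p|²,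 max|k_n^{ab}| ≤ C₁A Z^{−2}, H_n ≥ γ, and F_n ≤ η²/4. -/

import Mathlib

open Matrix Real MeasureTheory Set

noncomputable section

/-- 3×3 real matrices. -/
abbrev Mat3 := Matrix (Fin 3) (Fin 3) ℝ
/-- Momentum vectors in ℝ³. -/
abbrev V3 := Fin 3 → ℝ

/-- The quadratic form `g^{ab} p_a p_b = pᵀ G p`. -/
def quadG (G : Mat3) (p : V3) : ℝ := p ⬝ᵥ G *ᵥ p

/-- The quadratic form `k^{ab} p_a p_b`. -/
def quadK (K : Mat3) (p : V3) : ℝ := p ⬝ᵥ K *ᵥ p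

/-- Squared Euclidean norm `|p|²`. -/
def enorm2 (p : V3) : ℝ := ∑ i, p i ^ 2

/-- The Japanese bracket `⟨p⟩ = √(1+|p|²)`. -/
def jap (p : V3) : ℝ := Real.sqrt (1 + enorm2 p)

/-- The particle energy `p⁰ = √(1 + g^{ab} p_a p_b)`. -/
def p0 (G : Mat3) (p : V3) : ℝ := Real.sqrt (1 + quadG G p)

/-- The relative momentum `h = √(−(p⁰−q⁰)² + g^{ab}(p_a−q_a)(p_b−q_b))`. -/
def hrel (G : Mat3) (p q : V3) : ℝ :=
  Real.sqrt (-(p0 G p - p0 G q) ^ 2 + quadG G (p - q))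

/-- `s = (p⁰+q⁰)² − g^{ab}(p_a+q_a)(p_b+q_b)`. -/
def sCM (G : Mat3) (p q : V3) : ℝ :=
  (p0 G p + p0 G q) ^ 2 - quadG G (p + q)

/-- `Z(t) = e^{γt}`. -/
def Zfun (γ t : ℝ) : ℝ := Real.exp (γ * t)

/-- `Z_η(t) = e^{(1−η)γt}`. -/
def Zeta (γ η t : ℝ) : ℝ := Real.exp ((1 - η) * γ * t)

/-- The inverse weight `w(q)⁻¹ = exp(−Z_η(q⁰−1))`. -/
def winv (G : Mat3) (Zη : ℝ) (q : V3) : ℝ := Real.exp (-(Zη * (p0 G q - 1)))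

/-- The explicit lower-triangular orthonormal frame `(eⁱ_a)` of the metric `G = (g^{ab})`,
satisfying `eⁱ_a eʲ_b g^{ab} = δⁱʲ`. -/
def frameE (G : Mat3) : Mat3 :=
  !![1 / Real.sqrt (G 0 0), 0, 0;
     -(G 0 1) / Real.sqrt (G 0 0 * (G 0 0 * G 1 1 - G 0 1 ^ 2)),
     G 0 0 / Real.sqrt (G 0 0 * (G 0 0 * G 1 1 - G 0 1 ^ 2)), 0;
     (G 0 1 * G 1 2 - G 0 2 * G 1 1) / Real.sqrt ((G 0 0 * G 1 1 - G 0 1 ^ 2) * G.det),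
     (-(G 0 0) * G 1 2 + G 0 1 * G 0 2) / Real.sqrt ((G 0 0 * G 1 1 - G 0 1 ^ 2) * G.det),
     (G 0 0 * G 1 1 - G 0 1 ^ 2) / Real.sqrt ((G 0 0 * G 1 1 - G 0 1 ^ 2) * G.det)]

/-- `ω_i eⁱ_a`, i.e. the vector `(e⁻¹)ᵀ ω`. -/
def eoV (G : Mat3) (ω : V3) : V3 := (frameE G)ᵀ *ᵥ ω

/-- The coefficient in the relativistic parametrization of post-collision momenta:
`a = −q⁰(n^a ω_i eⁱ_a)/√s + q^a ω_i eⁱ_a + (n^a ω_i eⁱ_a)(n_b q^b)/(√s(n⁰+√s))`,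
where `n = p + q` and `n⁰ = p⁰ + q⁰`. -/
def aCoef (G : Mat3) (p q ω : V3) : ℝ :=
  -(p0 G q) * ((G *ᵥ (p + q)) ⬝ᵥ eoV G ω) / Real.sqrt (sCM G p q)
    + (G *ᵥ q) ⬝ᵥ eoV G ω
    + ((G *ᵥ (p + q)) ⬝ᵥ eoV G ω) * ((p + q) ⬝ᵥ G *ᵥ q)
      / (Real.sqrt (sCM G p q) * (p0 G p + p0 G q + Real.sqrt (sCM G p q)))

/-- The direction vector `ω_j eʲ_d + (n^c ω_j eʲ_c) n_d/(√s(n⁰+√s))`. -/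
def dirVec (G : Mat3) (p q ω : V3) : V3 := fun d =>
  eoV G ω d + ((G *ᵥ (p + q)) ⬝ᵥ eoV G ω) * (p + q) d
    / (Real.sqrt (sCM G p q) * (p0 G p + p0 G q + Real.sqrt (sCM G p q)))

/-- The post-collision momentum `p'`. -/
def pPost (G : Mat3) (p q ω : V3) : V3 :=
  fun d => p d + 2 * aCoef G p q ω * dirVec G p q ω d

/-- The post-collision momentum `q'`. -/
def qPost (G : Mat3) (p q ω : V3) : V3 :=
  fun d => q d - 2 * aCoef G p q ω * dirVec G p q ω d

/-- The unit sphere `𝕊² ⊂ ℝ³`. -/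
abbrev Sph := Metric.sphere (0 : EuclideanSpace ℝ (Fin 3)) 1

/-- The surface measure on the unit sphere. -/
def sphMeasure : Measure Sph := (volume : Measure (EuclideanSpace ℝ (Fin 3))).toSphere

/-- A point of the sphere, viewed as a vector of `ℝ³`. -/
def sphV (ω : Sph) : V3 := fun i => (ω : EuclideanSpace ℝ (Fin 3)) i

/-- The collision kernel `h^{1−b} √s/(p⁰ q⁰)` for the soft potential `σ(h,ω) = h^{−b}`. -/
def collKer (G : Mat3) (b : ℝ) (p q : V3) : ℝ :=
  hrel G p q ^ (1 - b) * Real.sqrt (sCM G p q) / (p0 G p * p0 G q)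

/-- The collision operator `Γ(f,f)` of the weighted Boltzmann equation. -/
def GammaOp (G : Mat3) (Zη b : ℝ) (f : V3 → ℝ) (p : V3) : ℝ :=
  Real.sqrt G.det * ∫ q : V3,
    (∫ ω : Sph, collKer G b p q *
        (f (pPost G p q (sphV ω)) * f (qPost G p q (sphV ω)) - f p * f q) ∂sphMeasure)
      * winv G Zη q

/-- The mixed collision operator used in the iteration for the Boltzmann equation, where
the loss term contains the value `fval` of the next iterate at `p`. -/
def GammaIter (G : Mat3) (Zη b : ℝ) (fn : V3 → ℝ) (fval : ℝ) (p : V3) : ℝ :=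
  Real.sqrt G.det * ∫ q : V3,
    (∫ ω : Sph, collKer G b p q *
        (fn (pPost G p q (sphV ω)) * fn (qPost G p q (sphV ω)) - fval * fn q) ∂sphMeasure)
      * winv G Zη q

/-- The energy density `ρ = (det g)^{−1/2} ∫ f p⁰ w⁻¹ dp`. -/
def rhoT (G : Mat3) (Zη : ℝ) (f : V3 → ℝ) : ℝ :=
  Real.sqrt G.det * ∫ p : V3, f p * p0 G p * winv G Zη p

/-- The stress `S^{ab} = (det g)^{−1/2} ∫ f p^a p^b/p⁰ w⁻¹ dp`. -/
def SupT (G : Mat3) (Zη : ℝ) (f : V3 → ℝ) : Mat3 :=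
  Matrix.of fun a b =>
    Real.sqrt G.det * ∫ p : V3, f p * ((G *ᵥ p) a * (G *ᵥ p) b / p0 G p) * winv G Zη p

/-- The trace `S = g_{ab}S^{ab} = (det g)^{−1/2} ∫ f g^{ab}p_ap_b/p⁰ w⁻¹ dp`. -/
def StrT (G : Mat3) (Zη : ℝ) (f : V3 → ℝ) : ℝ :=
  Real.sqrt G.det * ∫ p : V3, f p * (quadG G p / p0 G p) * winv G Zη p

/-- The trace `k = g_{ab} k^{ab}`. -/
def trK (G K : Mat3) : ℝ := ∑ a, ∑ b, G⁻¹ a b * K a b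

/-- The Hubble scalar `H = (1/3) g_{ab} k^{ab}`. -/
def Hub (G K : Mat3) : ℝ := (1 / 3) * trK G K

/-- The shear `σ^{ab} = k^{ab} − H g^{ab}`. -/
def shearUp (G K : Mat3) : Mat3 := K - Hub G K • G

/-- `σ_{ab} σ^{ab}` with `σ_{ab} = g_{ac}g_{bd}σ^{cd}`. -/
def shearSq (G K : Mat3) : ℝ :=
  ∑ a, ∑ b, (G⁻¹ * shearUp G K * G⁻¹) a b * shearUp G K a b

/-- The shear variable `F = σ_{ab}σ^{ab}/(4H²)`. -/
def Fvar (G K : Mat3) : ℝ := shearSq G K / (4 * Hub G K ^ 2)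

/-- `λ_η(p) = −((1−η)γ(p⁰−1) − k^{ab}p_a p_b/p⁰) Z_η`. -/
def lamEta (G K : Mat3) (γ η Zη : ℝ) (p : V3) : ℝ :=
  -((1 - η) * γ * (p0 G p - 1) - quadK K p / p0 G p) * Zη

/-- The right hand side of the evolution equation for `k^{ab}`:
`−2k^a_c k^{bc} − k k^{ab} + S^{ab} + (1/2)(ρ−S)g^{ab} + Λ g^{ab}`. -/
def kEvol (Λ Zη : ℝ) (G K : Mat3) (f : V3 → ℝ) : Mat3 :=
  (-2 : ℝ) • (K * G⁻¹ * K) - trK G K • K + SupT G Zη f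
    + ((1 / 2) * (rhoT G Zη f - StrT G Zη f)) • G + Λ • G

/-- The Hamiltonian constraint `−k_{ab}k^{ab} + k² = 2ρ + 2Λ`. -/
def ConstraintEq (Λ ρ : ℝ) (G K : Mat3) : Prop :=
  -(∑ a, ∑ b, (G⁻¹ * K * G⁻¹) a b * K a b) + trK G K ^ 2 = 2 * ρ + 2 * Λ

open Filter Topology

/-- The entrywise `ℓ¹` norm of a 3×3 matrix. -/
def entryNorm (M : Mat3) : ℝ := ∑ a, ∑ b, |M a b|

lemma entryNorm_nonneg (M : Mat3) : 0 ≤ entryNorm M := by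
  unfold entryNorm; positivity

lemma continuous_entryNorm : Continuous entryNorm := by
  unfold entryNorm
  fun_prop

lemma enorm2_nonneg (p : V3) : 0 ≤ enorm2 p := by
  unfold enorm2; positivity

lemma abs_le_sqrt_enorm2 (p : V3) (a : Fin 3) : |p a| ≤ √(enorm2 p) := by
  rw [← Real.sqrt_sq_eq_abs]
  exact Real.sqrt_le_sqrt
    (Finset.single_le_sum (f := fun i => p i ^ 2) (fun i _ => sq_nonneg _) (Finset.mem_univ a))

lemma quadG_eq_sum (G : Mat3) (p : V3) : quadG G p = ∑ a, ∑ b, G a b * (p a * p b) := by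
  simp only [quadG, dotProduct, mulVec, Finset.mul_sum]
  exact Finset.sum_congr rfl fun a _ => Finset.sum_congr rfl fun b _ => by ring

lemma abs_quadG_le (G : Mat3) (p : V3) : |quadG G p| ≤ entryNorm G * enorm2 p := by
  rw [quadG_eq_sum, entryNorm, Finset.sum_mul]
  refine (Finset.abs_sum_le_sum_abs _ _).trans (Finset.sum_le_sum fun a _ => ?_)
  rw [Finset.sum_mul]
  refine (Finset.abs_sum_le_sum_abs _ _).trans (Finset.sum_le_sum fun b _ => ?_)
  rw [abs_mul, abs_mul]
  refine mul_le_mul_of_nonneg_left ?_ (abs_nonneg _)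
  calc |p a| * |p b| ≤ √(enorm2 p) * √(enorm2 p) := by
        gcongr <;> exact abs_le_sqrt_enorm2 p _
    _ = enorm2 p := Real.mul_self_sqrt (enorm2_nonneg p)

lemma quadG_sub (G G' : Mat3) (p : V3) : quadG (G - G') p = quadG G p - quadG G' p := by
  simp only [quadG, sub_mulVec, dotProduct_sub]

lemma abs_mulVec_le (G : Mat3) (p : V3) (a : Fin 3) :
    |(G *ᵥ p) a| ≤ entryNorm G * √(enorm2 p) := by
  calc |(G *ᵥ p) a| ≤ ∑ b, |G a b * p b| :=
        Finset.abs_sum_le_sum_abs (fun b => G a b * p b) Finset.univ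
    _ ≤ ∑ b, |G a b| * √(enorm2 p) := Finset.sum_le_sum fun b _ => by
        rw [abs_mul]
        exact mul_le_mul_of_nonneg_left (abs_le_sqrt_enorm2 p b) (abs_nonneg _)
    _ = (∑ b, |G a b|) * √(enorm2 p) := by rw [Finset.sum_mul]
    _ ≤ entryNorm G * √(enorm2 p) := by
        gcongr
        exact Finset.single_le_sum (f := fun a => ∑ b, |G a b|)
          (fun i _ => Finset.sum_nonneg fun _ _ => abs_nonneg _) (Finset.mem_univ a)

lemma norm_sq_le_enorm2 (p : V3) : ‖p‖ ^ 2 ≤ enorm2 p := by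
  have h : ‖p‖ ≤ √(enorm2 p) :=
    (pi_norm_le_iff_of_nonneg (Real.sqrt_nonneg _)).2 fun a => abs_le_sqrt_enorm2 p a
  exact (Real.le_sqrt (norm_nonneg _) (enorm2_nonneg p)).1 h

/-- The majorant of `⟨p⟩² ⟨p⟩^{-m}` used to bound all matter terms. -/
def momentMajorant (m : ℝ) (p : V3) : ℝ := (1 + ‖p‖ ^ 2) ^ (-(m - 2) / 2)

lemma integrable_momentMajorant {m : ℝ} (hm : 5 < m) : Integrable (momentMajorant m) :=
  integrable_rpow_neg_one_add_norm_sq (by simp; linarith)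

lemma winv_le_one {G : Mat3} {Zη : ℝ} {p : V3} (hG : 0 ≤ quadG G p) (hZ : 0 ≤ Zη) :
    winv G Zη p ≤ 1 := by
  have h : 1 ≤ p0 G p := Real.one_le_sqrt.2 (by linarith)
  rw [winv, Real.exp_le_one_iff]
  nlinarith

lemma abs_le_of_jap_bound {m c : ℝ} {p : V3} {y : ℝ} (hm : 5 < m) (hc : 0 ≤ c)
    (h : jap p ^ m * |y| ≤ c) : |y| * (1 + enorm2 p) ≤ c * momentMajorant m p := by
  have hE := enorm2_nonneg p
  have h1 : 0 < 1 + enorm2 p := by linarith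
  have hj : jap p ^ m = (1 + enorm2 p) ^ (m / 2) := by
    rw [jap, Real.sqrt_eq_rpow, ← Real.rpow_mul h1.le]
    congr 1; ring
  have hmaj : (1 + enorm2 p) ^ (-(m - 2) / 2) ≤ momentMajorant m p :=
    Real.rpow_le_rpow_of_nonpos (by positivity) (by linarith [norm_sq_le_enorm2 p]) (by linarith)
  calc |y| * (1 + enorm2 p)
      = (jap p ^ m * |y|) * (1 + enorm2 p) ^ (-(m - 2) / 2) := by
        have : (1 + enorm2 p) = (1 + enorm2 p) ^ (m / 2) * (1 + enorm2 p) ^ (-(m - 2) / 2) := by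
          rw [← Real.rpow_add h1]
          ring_nf
          simp
        rw [hj]
        nth_rewrite 1 [this]
        ring
    _ ≤ c * momentMajorant m p := by
        gcongr

lemma abs_moment_le {m c C Zη : ℝ} {G : Mat3} {f φ : V3 → ℝ} (hm : 5 < m) (hc : 0 ≤ c)
    (hC : 0 ≤ C) (hZ : 0 ≤ Zη) (hG : ∀ p, 0 ≤ quadG G p)
    (hf : ∀ p, jap p ^ m * |f p| ≤ c) (hφ : ∀ p, |φ p| ≤ C * (1 + enorm2 p)) :
    |∫ p, f p * φ p * winv G Zη p| ≤ C * (c * ∫ p, momentMajorant m p) := by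
  rw [← integral_const_mul, ← integral_const_mul, ← Real.norm_eq_abs]
  refine norm_integral_le_of_norm_le (((integrable_momentMajorant hm).const_mul c).const_mul C)
    (Eventually.of_forall fun p => ?_)
  have hw : 0 ≤ winv G Zη p := (Real.exp_pos _).le
  rw [Real.norm_eq_abs, abs_mul, abs_mul, abs_of_nonneg hw]
  calc |f p| * |φ p| * winv G Zη p ≤ |f p| * |φ p| * 1 := by
        gcongr; exact winv_le_one (hG p) hZ
    _ ≤ |f p| * (C * (1 + enorm2 p)) := by rw [mul_one]; gcongr; exact hφ p
    _ = C * (|f p| * (1 + enorm2 p)) := by ring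
    _ ≤ C * (c * momentMajorant m p) :=
        mul_le_mul_of_nonneg_left (abs_le_of_jap_bound hm hc (hf p)) hC

lemma div_p0_le {G : Mat3} {p : V3} (hG : 0 ≤ quadG G p) {x : ℝ} (hx : 0 ≤ x) :
    x / p0 G p ≤ x :=
  div_le_self hx (Real.one_le_sqrt.2 (by linarith))

/-- A bound on the right hand side of the evolution equation for `k^{ab}` depending only on the
metric, the second fundamental form, and a bound `J` for the moments of the distribution. -/
def kEvolBound (Λ J : ℝ) (G K : Mat3) (a b : Fin 3) : ℝ :=
  |((-2 : ℝ) • (K * G⁻¹ * K) - trK G K • K + Λ • G) a b|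
    + √G.det * (entryNorm G ^ 2 * J)
    + (1 / 2) * (√G.det * ((1 + entryNorm G) * J) + √G.det * (entryNorm G * J)) * |G a b|

lemma abs_kEvol_le {Λ m c Zη : ℝ} {G K : Mat3} {f : V3 → ℝ} (hm : 5 < m) (hc : 0 ≤ c)
    (hZ : 0 ≤ Zη) (hG : ∀ p, 0 ≤ quadG G p) (hf : ∀ p, jap p ^ m * |f p| ≤ c) (a b : Fin 3) :
    |kEvol Λ Zη G K f a b| ≤ kEvolBound Λ (c * ∫ p, momentMajorant m p) G K a b := by
  have hN := entryNorm_nonneg G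
  have hd := Real.sqrt_nonneg G.det
  have hS : |SupT G Zη f a b| ≤
      √G.det * (entryNorm G ^ 2 * (c * ∫ p, momentMajorant m p)) := by
    rw [SupT, of_apply, abs_mul, abs_of_nonneg hd]
    gcongr
    refine abs_moment_le hm hc (sq_nonneg _) hZ hG hf fun p => ?_
    rw [abs_div, abs_of_nonneg (show 0 ≤ p0 G p from Real.sqrt_nonneg _)]
    refine (div_p0_le (hG p) (abs_nonneg _)).trans ?_
    rw [abs_mul]
    calc |(G *ᵥ p) a| * |(G *ᵥ p) b|
        ≤ (entryNorm G * √(enorm2 p)) * (entryNorm G * √(enorm2 p)) := by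
          gcongr <;> exact abs_mulVec_le G p _
      _ = entryNorm G ^ 2 * enorm2 p := by
          rw [mul_mul_mul_comm, Real.mul_self_sqrt (enorm2_nonneg p), sq]
      _ ≤ _ := by gcongr; linarith
  have hρ : |rhoT G Zη f| ≤
      √G.det * ((1 + entryNorm G) * (c * ∫ p, momentMajorant m p)) := by
    rw [rhoT, abs_mul, abs_of_nonneg hd]
    gcongr
    refine abs_moment_le hm hc (by linarith) hZ hG hf fun p => ?_
    have hq := (abs_le.1 (abs_quadG_le G p)).2
    have hE := enorm2_nonneg p
    have hle : 1 + quadG G p ≤ (1 + entryNorm G) * (1 + enorm2 p) := by nlinarith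
    rw [abs_of_nonneg (show 0 ≤ p0 G p from Real.sqrt_nonneg _), p0]
    refine Real.sqrt_le_iff.2 ⟨by positivity, hle.trans ?_⟩
    have : 1 ≤ (1 + entryNorm G) * (1 + enorm2 p) := by nlinarith [mul_nonneg hN hE]
    nlinarith
  have hs : |StrT G Zη f| ≤ √G.det * (entryNorm G * (c * ∫ p, momentMajorant m p)) := by
    rw [StrT, abs_mul, abs_of_nonneg hd]
    gcongr
    refine abs_moment_le hm hc hN hZ hG hf fun p => ?_
    rw [abs_div, abs_of_nonneg (show 0 ≤ p0 G p from Real.sqrt_nonneg _)]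
    refine (div_p0_le (hG p) (abs_nonneg _)).trans ((abs_quadG_le G p).trans ?_)
    gcongr; linarith
  have hsplit : kEvol Λ Zη G K f a b =
      ((-2 : ℝ) • (K * G⁻¹ * K) - trK G K • K + Λ • G) a b + SupT G Zη f a b
        + (1 / 2) * (rhoT G Zη f - StrT G Zη f) * G a b := by
    simp only [kEvol, Matrix.add_apply, Matrix.sub_apply, Matrix.smul_apply, smul_eq_mul]
    ring
  rw [hsplit, kEvolBound]
  refine (abs_add_three _ _ _).trans ?_
  rw [abs_mul, abs_mul, abs_of_pos (by norm_num : (0 : ℝ) < 1 / 2)]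
  gcongr
  exact (abs_sub _ _).trans (add_le_add hρ hs)

section Continuity

variable {g₀ k₀ : Mat3}

lemma continuousAt_inv_fst (hdet : g₀.det ≠ 0) :
    ContinuousAt (fun x : Mat3 × Mat3 => x.1⁻¹) (g₀, k₀) := by
  have h : ContinuousAt (Inv.inv : Mat3 → Mat3) g₀ := by
    refine continuousAt_matrix_inv _ ?_
    rw [Ring.inverse_eq_inv']
    exact continuousAt_inv₀ hdet
  exact ContinuousAt.comp (f := Prod.fst) (x := (g₀, k₀)) h continuousAt_fst

lemma continuousAt_trK (hdet : g₀.det ≠ 0) :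
    ContinuousAt (fun x : Mat3 × Mat3 => trK x.1 x.2) (g₀, k₀) := by
  have hi := continuousAt_inv_fst (k₀ := k₀) hdet
  have h : ContinuousAt (fun x : Mat3 × Mat3 => (x.1⁻¹, x.2)) (g₀, k₀) :=
    hi.prodMk continuousAt_snd
  have hc : Continuous (fun y : Mat3 × Mat3 => ∑ a, ∑ b, y.1 a b * y.2 a b) := by fun_prop
  exact ContinuousAt.comp (f := fun x : Mat3 × Mat3 => (x.1⁻¹, x.2)) hc.continuousAt h

lemma continuousAt_Hub (hdet : g₀.det ≠ 0) :
    ContinuousAt (fun x : Mat3 × Mat3 => Hub x.1 x.2) (g₀, k₀) :=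
  (continuousAt_trK hdet).const_mul _

lemma continuousAt_Fvar (hdet : g₀.det ≠ 0) (hH : Hub g₀ k₀ ≠ 0) :
    ContinuousAt (fun x : Mat3 × Mat3 => Fvar x.1 x.2) (g₀, k₀) := by
  have hs : ContinuousAt (fun x : Mat3 × Mat3 => shearUp x.1 x.2) (g₀, k₀) :=
    continuousAt_snd.sub ((continuousAt_Hub hdet).smul continuousAt_fst)
  have h : ContinuousAt (fun x : Mat3 × Mat3 => (x.1⁻¹, shearUp x.1 x.2)) (g₀, k₀) :=
    (continuousAt_inv_fst hdet).prodMk hs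
  have hc : Continuous
      (fun y : Mat3 × Mat3 => ∑ a, ∑ b, (y.1 * y.2 * y.1) a b * y.2 a b) := by fun_prop
  have hsq : ContinuousAt (fun x : Mat3 × Mat3 => shearSq x.1 x.2) (g₀, k₀) :=
    ContinuousAt.comp (f := fun x : Mat3 × Mat3 => (x.1⁻¹, shearUp x.1 x.2)) hc.continuousAt h
  exact hsq.div (((continuousAt_Hub hdet).pow 2).const_mul 4)
    (mul_ne_zero four_ne_zero (pow_ne_zero 2 hH))

lemma continuousAt_kEvolBound (Λ J : ℝ) (a b : Fin 3) (hdet : g₀.det ≠ 0) :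
    ContinuousAt (fun x : Mat3 × Mat3 => kEvolBound Λ J x.1 x.2 a b) (g₀, k₀) := by
  have h : ContinuousAt (fun x : Mat3 × Mat3 => ((x.1, x.2), (x.1⁻¹, trK x.1 x.2))) (g₀, k₀) :=
    (continuousAt_fst.prodMk continuousAt_snd).prodMk
      ((continuousAt_inv_fst hdet).prodMk (continuousAt_trK hdet))
  have hN := continuous_entryNorm
  have hc : Continuous (fun y : (Mat3 × Mat3) × (Mat3 × ℝ) =>
      |((-2 : ℝ) • (y.1.2 * y.2.1 * y.1.2) - y.2.2 • y.1.2 + Λ • y.1.1) a b|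
        + √y.1.1.det * (entryNorm y.1.1 ^ 2 * J)
        + (1 / 2) * (√y.1.1.det * ((1 + entryNorm y.1.1) * J)
          + √y.1.1.det * (entryNorm y.1.1 * J)) * |y.1.1 a b|) := by
    simp only [Matrix.add_apply, Matrix.sub_apply, Matrix.smul_apply]
    fun_prop
  exact ContinuousAt.comp
    (f := fun x : Mat3 × Mat3 => ((x.1, x.2), (x.1⁻¹, trK x.1 x.2))) hc.continuousAt h

/-- A neighbourhood of `(g₀, k₀, t₀)` contains a box in the matrix entries and the time. -/
lemma exists_box_of_eventually {t₀ : ℝ} {P : Mat3 → Mat3 → ℝ → Prop}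
    (h : ∀ᶠ x : (Mat3 × Mat3) × ℝ in 𝓝 ((g₀, k₀), t₀), P x.1.1 x.1.2 x.2) :
    ∃ ε > 0, ∀ G K t, (∀ a b, |G a b - g₀ a b| ≤ ε) → (∀ a b, |K a b - k₀ a b| ≤ ε) →
      |t - t₀| ≤ ε → P G K t := by
  have h' : ∀ᶠ x : ((Fin 3 → Fin 3 → ℝ) × (Fin 3 → Fin 3 → ℝ)) × ℝ in 𝓝 ((g₀, k₀), t₀),
      P x.1.1 x.1.2 x.2 := h
  obtain ⟨ε, hε, H⟩ := Metric.nhds_basis_closedBall.eventually_iff.1 h'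
  have hmat : ∀ X Y : Fin 3 → Fin 3 → ℝ, (∀ a b, |X a b - Y a b| ≤ ε) → dist X Y ≤ ε :=
    fun X Y hXY => (dist_pi_le_iff hε.le).2 fun a => (dist_pi_le_iff hε.le).2 fun b => hXY a b
  refine ⟨ε, hε, fun G K t hG hK ht => @H ((G, K), t) ?_⟩
  exact max_le (max_le (hmat G g₀ hG) (hmat K k₀ hK)) ht

end Continuity

lemma abs_sub_le_of_hasDerivWithinAt {u u' : ℝ → ℝ} {t₀ t₁ T C : ℝ} (h₁ : t₁ ≤ T)
    (hu : ∀ s ∈ Icc t₀ T, HasDerivWithinAt u (u' s) (Icc t₀ T) s)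
    (hC : ∀ s ∈ Icc t₀ t₁, |u' s| ≤ C) {t : ℝ} (ht : t ∈ Icc t₀ t₁) :
    |u t - u t₀| ≤ C * (t - t₀) := by
  have hsub : Icc t₀ t₁ ⊆ Icc t₀ T := Icc_subset_Icc_right h₁
  have := (convex_Icc t₀ t₁).norm_image_sub_le_of_norm_hasDerivWithin_le
    (fun s hs => (hu s (hsub hs)).mono hsub) hC (left_mem_Icc.2 (ht.1.trans ht.2)) ht
  rwa [Real.norm_eq_abs, Real.norm_eq_abs, abs_of_nonneg (sub_nonneg.2 ht.1)] at this

lemma eventually_quadG_bounds {γ t₀ A C₁ : ℝ} {g₀ k₀ : Mat3} (hA : 0 < A) (hC₁ : 1 < C₁)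
    (hg₀b : ∀ p : V3,
      (1 / A) * enorm2 p ≤ Real.exp (2 * γ * t₀) * quadG g₀ p ∧
      Real.exp (2 * γ * t₀) * quadG g₀ p ≤ A * enorm2 p) :
    ∀ᶠ x : (Mat3 × Mat3) × ℝ in 𝓝 ((g₀, k₀), t₀), ∀ p : V3,
      (1 / (C₁ * A)) * enorm2 p ≤ Zfun γ x.2 ^ 2 * quadG x.1.1 p ∧
        Zfun γ x.2 ^ 2 * quadG x.1.1 p ≤ C₁ * A * enorm2 p := by
  set B := Real.exp (2 * γ * t₀) with hB
  have hBpos : 0 < B := Real.exp_pos _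
  have hZ₀ : Zfun γ t₀ ^ 2 = B := by
    rw [hB, Zfun, ← Real.exp_nat_mul]; congr 1; push_cast; ring
  have hN := continuous_entryNorm
  have hN₀ : entryNorm (g₀ - g₀) = 0 := by simp [entryNorm]
  have hZc : Continuous (Zfun γ) := by unfold Zfun; fun_prop
  have hlo : Continuous fun x : (Mat3 × Mat3) × ℝ =>
      Zfun γ x.2 ^ 2 * (1 / (A * B) - entryNorm (x.1.1 - g₀)) := by fun_prop
  have hup : Continuous fun x : (Mat3 × Mat3) × ℝ =>
      Zfun γ x.2 ^ 2 * (A / B + entryNorm (x.1.1 - g₀)) := by fun_prop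
  have e1 := (hlo.continuousAt (x := ((g₀, k₀), t₀))).eventually_const_lt
    (u := 1 / (C₁ * A)) (by
      simp only [hN₀, hZ₀, sub_zero]
      rw [show B * (1 / (A * B)) = 1 / A by field_simp]
      exact one_div_lt_one_div_of_lt hA (by nlinarith))
  have e2 := (hup.continuousAt (x := ((g₀, k₀), t₀))).eventually_lt_const
    (u := C₁ * A) (by
      simp only [hN₀, hZ₀, add_zero]
      rw [show B * (A / B) = A by field_simp]
      nlinarith)
  filter_upwards [e1, e2] with x h1 h2 p
  have hE := enorm2_nonneg p
  have hq := abs_le.1 (abs_quadG_le (x.1.1 - g₀) p)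
  rw [quadG_sub] at hq
  have hZp : 0 ≤ Zfun γ x.2 ^ 2 := sq_nonneg _
  have hl : (1 / (A * B)) * enorm2 p ≤ quadG g₀ p := by
    rw [show 1 / (A * B) * enorm2 p = (1 / A * enorm2 p) / B by field_simp, div_le_iff₀ hBpos]
    linarith [(hg₀b p).1]
  have hu : quadG g₀ p ≤ (A / B) * enorm2 p := by
    rw [show A / B * enorm2 p = (A * enorm2 p) / B by field_simp, le_div_iff₀ hBpos]
    linarith [(hg₀b p).2]
  constructor
  · calc (1 / (C₁ * A)) * enorm2 p
        ≤ Zfun γ x.2 ^ 2 * (1 / (A * B) - entryNorm (x.1.1 - g₀)) * enorm2 p := by gcongr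
      _ = Zfun γ x.2 ^ 2 * ((1 / (A * B) - entryNorm (x.1.1 - g₀)) * enorm2 p) := by ring
      _ ≤ _ := by gcongr; linarith [hq.1]
  · calc Zfun γ x.2 ^ 2 * quadG x.1.1 p
        ≤ Zfun γ x.2 ^ 2 * ((A / B + entryNorm (x.1.1 - g₀)) * enorm2 p) := by
          gcongr; linarith [hq.2]
      _ = Zfun γ x.2 ^ 2 * (A / B + entryNorm (x.1.1 - g₀)) * enorm2 p := by ring
      _ ≤ _ := by gcongr

lemma eventually_abs_entry_le {γ t₀ A C₁ : ℝ} {g₀ k₀ : Mat3} (hA : 0 < A) (hC₁ : 1 < C₁)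
    (hk₀b : ∀ a b : Fin 3, |k₀ a b| ≤ A * Real.exp (-(2 * γ * t₀))) :
    ∀ᶠ x : (Mat3 × Mat3) × ℝ in 𝓝 ((g₀, k₀), t₀), ∀ a b : Fin 3,
      |x.1.2 a b| ≤ C₁ * A / Zfun γ x.2 ^ 2 := by
  rw [eventually_all]; intro a
  rw [eventually_all]; intro b
  have hZc : Continuous (Zfun γ) := by unfold Zfun; fun_prop
  have hZ0 : ∀ t, Zfun γ t ^ 2 ≠ 0 := fun t => pow_ne_zero 2 (Real.exp_pos _).ne'
  have hl : Continuous fun x : (Mat3 × Mat3) × ℝ => |x.1.2 a b| := by fun_prop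
  have hr : Continuous fun x : (Mat3 × Mat3) × ℝ => C₁ * A / Zfun γ x.2 ^ 2 :=
    continuous_const.div (by fun_prop) fun x => hZ0 _
  have hZ₀ : Zfun γ t₀ ^ 2 = Real.exp (2 * γ * t₀) := by
    rw [Zfun, ← Real.exp_nat_mul]; congr 1; push_cast; ring
  refine (hl.continuousAt.eventually_lt hr.continuousAt ?_).mono fun x hx => hx.le
  refine (hk₀b a b).trans_lt ?_
  dsimp only
  rw [hZ₀, Real.exp_neg, ← div_eq_mul_inv]
  gcongr
  nlinarith

/-- uniform bounds for the iteration for the Einstein equations. Given a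
distribution `f` with `‖f(s)‖_{L^∞_m} ≤ c₂` (`m > 5`) and initial data `g₀, k₀` with the
stated bounds, `H₀ > γ` and `F₀ < 1/4`, for every `C₁ > 1` there exist `η ∈ [0,1)` and
`T₂ ∈ (t₀,T]` such that every iteration sequence `(g_n, k_n)` satisfies the stated bounds
for all `n` and `t ∈ [t₀,T₂]`. -/
theorem stmt11 (Λ γ t₀ T c₂ m A : ℝ)
    (hΛ : 0 < Λ) (hγ : γ = Real.sqrt (Λ / 3)) (hT : t₀ < T)
    (hc₂ : 0 < c₂) (hm : 5 < m) (hA : 0 < A)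
    (f : ℝ → V3 → ℝ)
    (hfpos : ∀ t ∈ Icc t₀ T, ∀ p, 0 ≤ f t p)
    (hfbound : ∀ t ∈ Icc t₀ T, ∀ p : V3, jap p ^ m * |f t p| ≤ c₂)
    (g₀ k₀ : Mat3) (hg₀pd : g₀.PosDef) (hk₀symm : k₀.IsSymm)
    (hg₀b : ∀ p : V3,
      (1 / A) * enorm2 p ≤ Real.exp (2 * γ * t₀) * quadG g₀ p ∧
      Real.exp (2 * γ * t₀) * quadG g₀ p ≤ A * enorm2 p)
    (hk₀b : ∀ a b : Fin 3, |k₀ a b| ≤ A * Real.exp (-(2 * γ * t₀)))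
    (hH₀ : γ < Hub g₀ k₀) (hF₀ : Fvar g₀ k₀ < 1 / 4) :
    ∀ C₁ : ℝ, 1 < C₁ → ∃ η, 0 ≤ η ∧ η < 1 ∧ ∃ T₂, t₀ < T₂ ∧ T₂ ≤ T ∧
      ∀ gs ks : ℕ → ℝ → Mat3,
        (∀ t, gs 0 t = g₀ ∧ ks 0 t = k₀) →
        (∀ n, gs (n + 1) t₀ = g₀ ∧ ks (n + 1) t₀ = k₀) →
        (∀ n, ∀ a b : Fin 3, ∀ t ∈ Icc t₀ T,
          HasDerivWithinAt (fun s => gs (n + 1) s a b) (-2 * ks n t a b) (Icc t₀ T) t) →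
        (∀ n, ∀ a b : Fin 3, ∀ t ∈ Icc t₀ T,
          HasDerivWithinAt (fun s => ks (n + 1) s a b)
            (kEvol Λ (Zeta γ η t) (gs n t) (ks n t) (f t) a b) (Icc t₀ T) t) →
        ∀ n, ∀ t ∈ Icc t₀ T₂,
          (∀ p : V3, (1 / (C₁ * A)) * enorm2 p ≤ Zfun γ t ^ 2 * quadG (gs n t) p ∧
            Zfun γ t ^ 2 * quadG (gs n t) p ≤ C₁ * A * enorm2 p) ∧
          (∀ a b : Fin 3, |ks n t a b| ≤ C₁ * A / Zfun γ t ^ 2) ∧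
          γ ≤ Hub (gs n t) (ks n t) ∧
          Fvar (gs n t) (ks n t) ≤ η ^ 2 / 4 := by
  intro C₁ hC₁
  have hγ0 : 0 < γ := hγ ▸ Real.sqrt_pos.2 (by positivity)
  have hdet : g₀.det ≠ 0 := hg₀pd.det_pos.ne'
  have hH0 : Hub g₀ k₀ ≠ 0 := (hγ0.trans hH₀).ne'
  obtain ⟨η, hη0, hη1, hFη⟩ : ∃ η : ℝ, 0 ≤ η ∧ η < 1 ∧ Fvar g₀ k₀ < η ^ 2 / 4 := by
    refine ⟨√(max 0 ((4 * Fvar g₀ k₀ + 1) / 2)), Real.sqrt_nonneg _, ?_, ?_⟩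
    · rw [Real.sqrt_lt' one_pos]
      exact max_lt (by norm_num) (by linarith)
    · rw [Real.sq_sqrt (le_max_left _ _)]
      linarith [le_max_right 0 ((4 * Fvar g₀ k₀ + 1) / 2)]
  set J := c₂ * ∫ p, momentMajorant m p with hJ
  have hfst : Tendsto Prod.fst (𝓝 ((g₀, k₀), t₀)) (𝓝 (g₀, k₀)) := continuousAt_fst
  have eH := hfst.eventually ((continuousAt_Hub (k₀ := k₀) hdet).eventually_const_lt hH₀)
  have eF := hfst.eventually ((continuousAt_Fvar hdet hH0).eventually_lt_const hFη)
  obtain ⟨M, hM⟩ : ∃ M, ∀ᶠ x : Mat3 × Mat3 in 𝓝 (g₀, k₀), ∀ a b,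
      kEvolBound Λ J x.1 x.2 a b ≤ M := by
    refine ⟨∑ a, ∑ b, (|kEvolBound Λ J g₀ k₀ a b| + 1), ?_⟩
    rw [eventually_all]; intro a
    rw [eventually_all]; intro b
    refine ((continuousAt_kEvolBound Λ J a b hdet).eventually_lt_const ?_).mono
      fun x hx => hx.le
    calc kEvolBound Λ J g₀ k₀ a b < |kEvolBound Λ J g₀ k₀ a b| + 1 := by
          linarith [le_abs_self (kEvolBound Λ J g₀ k₀ a b)]
      _ ≤ ∑ b, (|kEvolBound Λ J g₀ k₀ a b| + 1) :=
          Finset.single_le_sum (f := fun b => |kEvolBound Λ J g₀ k₀ a b| + 1)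
            (fun _ _ => by positivity) (Finset.mem_univ b)
      _ ≤ _ := Finset.single_le_sum (f := fun a => ∑ b, (|kEvolBound Λ J g₀ k₀ a b| + 1))
            (fun _ _ => by positivity) (Finset.mem_univ a)
  obtain ⟨ε, hε, hbox⟩ := exists_box_of_eventually
    (P := fun G K t => ((∀ p : V3, (1 / (C₁ * A)) * enorm2 p ≤ Zfun γ t ^ 2 * quadG G p ∧
        Zfun γ t ^ 2 * quadG G p ≤ C₁ * A * enorm2 p) ∧
      (∀ a b : Fin 3, |K a b| ≤ C₁ * A / Zfun γ t ^ 2) ∧ γ ≤ Hub G K ∧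
        Fvar G K ≤ η ^ 2 / 4) ∧ ∀ a b, kEvolBound Λ J G K a b ≤ M)
    (by
      filter_upwards [eventually_quadG_bounds (k₀ := k₀) hA hC₁ hg₀b,
        eventually_abs_entry_le (g₀ := g₀) hA hC₁ hk₀b, eH, eF, hfst.eventually hM]
        with x h1 h2 h3 h4 h5
      exact ⟨⟨h1, h2, h3.le, h4.le⟩, h5⟩)
  set L := |M| + 2 * (entryNorm k₀ + ε) + 1 with hL
  have hk₀N := entryNorm_nonneg k₀
  have hLpos : 0 < L := by positivity
  set T₂ := min T (t₀ + min ε (ε / L)) with hT₂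
  have hT₂T : T₂ ≤ T := min_le_left _ _
  refine ⟨η, hη0, hη1, T₂, lt_min hT (by linarith [lt_min hε (div_pos hε hLpos)]), hT₂T, ?_⟩
  intro gs ks hinit0 hinit hgs hks
  have htime : ∀ t ∈ Icc t₀ T₂, |t - t₀| ≤ ε ∧ L * (t - t₀) ≤ ε := by
    intro t ht
    have h := ht.2.trans (min_le_right _ _)
    have h1 : t - t₀ ≤ ε := by linarith [min_le_left ε (ε / L)]
    have h2 : t - t₀ ≤ ε / L := by linarith [min_le_right ε (ε / L)]
    refine ⟨by rwa [abs_of_nonneg (sub_nonneg.2 ht.1)], ?_⟩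
    rw [mul_comm]
    exact (le_div_iff₀ hLpos).1 h2
  have hclose : ∀ n, ∀ t ∈ Icc t₀ T₂,
      (∀ a b, |gs n t a b - g₀ a b| ≤ ε) ∧ (∀ a b, |ks n t a b - k₀ a b| ≤ ε) := by
    intro n
    induction n with
    | zero =>
      intro t _
      rw [(hinit0 t).1, (hinit0 t).2]
      simp [hε.le]
    | succ n ih =>
      intro t ht
      have hstep : ∀ u u' : ℝ → ℝ, (∀ s ∈ Icc t₀ T, HasDerivWithinAt u (u' s) (Icc t₀ T) s) →
          (∀ s ∈ Icc t₀ T₂, |u' s| ≤ L) → |u t - u t₀| ≤ ε := fun u u' hu hu' =>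
        (abs_sub_le_of_hasDerivWithinAt hT₂T hu hu' ht).trans (htime t ht).2
      rw [← (hinit n).1, ← (hinit n).2]
      refine ⟨fun a b => hstep _ _ (hgs n a b) fun s hs => ?_,
        fun a b => hstep _ _ (hks n a b) fun s hs => ?_⟩
      · have h1 := abs_le.1 ((ih s hs).2 a b)
        have h2 : |k₀ a b| ≤ entryNorm k₀ :=
          (Finset.single_le_sum (f := fun b => |k₀ a b|)
            (fun _ _ => abs_nonneg _) (Finset.mem_univ b)).trans
          (Finset.single_le_sum (f := fun a => ∑ b, |k₀ a b|)
            (fun _ _ => by positivity) (Finset.mem_univ a))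
        have h3 := abs_le.1 h2
        have h4 := abs_nonneg M
        rw [abs_le]
        constructor <;> linarith [h1.1, h1.2, h3.1, h3.2]
      · have hP := hbox _ _ _ (ih s hs).1 (ih s hs).2 (htime s hs).1
        have hG : ∀ p, 0 ≤ quadG (gs n s) p := fun p => by
          have hE := enorm2_nonneg p
          have h := (hP.1.1 p).1
          have hZ : 0 < Zfun γ s ^ 2 := pow_pos (Real.exp_pos _) 2
          exact nonneg_of_mul_nonneg_right (le_trans (by positivity) h) hZ
        refine (abs_kEvol_le hm hc₂.le (Real.exp_pos _).le hG
          (hfbound s ⟨hs.1, hs.2.trans hT₂T⟩) a b).trans ((hP.2 a b).trans ?_)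
        linarith [le_abs_self M]
  intro n t ht
  exact (hbox _ _ _ (hclose n t ht).1 (hclose n t ht).2 (htime t ht).1).1
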